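/- For every h ∈ ℕ, the inductively defined unbalanced Wasserstein metric W^h is a well-defined metric on the iterated-degree-measure space M_h that metrizes the (weak) topology of M_h, and the Wasserstein metric δW^h on Borel probability measures over the metric space (M_h, W^h) is a well-defined metric that metrizes the weak topology on P(M_h). -/

import Mathlib

open MeasureTheory Set

noncomputable section

/-- Borel measures of total mass at most one on `X`. -/
abbrev SubProb (X : Type) [MeasurableSpace X] : Type :=
  {μ : Measure X // μ Set.univ ≤ 1}

/-- The weak topology on `SubProb X`: the coarsest topology making all maps
`μ ↦ ∫ f dμ` for bounded continuous `f` continuous. -/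
def subProbWeakTop (X : Type) [MeasurableSpace X] [TopologicalSpace X] :
    TopologicalSpace (SubProb X) :=
  ⨅ f : BoundedContinuousFunction X ℝ,
    TopologicalSpace.induced (fun μ => ∫ x, f x ∂μ.val) inferInstance

/-- Iterated degree measure spaces with their (weak) topologies. -/
def IDM : ℕ → Σ X : Type, TopologicalSpace X
  | 0 => ⟨Unit, inferInstance⟩
  | (h+1) =>
      let p := IDM h
      ⟨@SubProb p.1 (@borel p.1 p.2), @subProbWeakTop p.1 (@borel p.1 p.2) p.2⟩

/-- The space of iterated degree measures of depth `h`. -/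
def M (h : ℕ) : Type := (IDM h).1

instance (h : ℕ) : TopologicalSpace (M h) := (IDM h).2
instance (h : ℕ) : MeasurableSpace (M h) := borel (M h)
instance (h : ℕ) : BorelSpace (M h) := ⟨rfl⟩

def toSub {h : ℕ} (α : M (h+1)) : SubProb (M h) := α
def ofSub {h : ℕ} (μ : SubProb (M h)) : M (h+1) := μ
/-- The underlying measure of an iterated degree measure. -/
def toMeas {h : ℕ} (α : M (h+1)) : Measure (M h) := (toSub α).1

/-- `d` satisfies the axioms of a metric. -/
def IsMetric {X : Type _} (d : X → X → ℝ) : Prop :=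
  (∀ x y, 0 ≤ d x y) ∧ (∀ x y, d x y = d y x) ∧
    (∀ x y, d x y = 0 ↔ x = y) ∧ (∀ x y z, d x z ≤ d x y + d y z)

/-- The topology generated by the open balls of a distance function `d`. -/
def ballTop {X : Type _} (d : X → X → ℝ) : TopologicalSpace X :=
  TopologicalSpace.generateFrom {U | ∃ x r, 0 < r ∧ U = {y | d x y < r}}

def uwAux {X : Type _} [MeasurableSpace X] (d : X → X → ℝ) (μ ν : Measure X) : ℝ :=
  (μ Set.univ).toReal - (ν Set.univ).toReal +
    sInf {r : ℝ | ∃ γ : Measure (X × X), γ Set.univ ≤ 1 ∧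
      γ.map Prod.fst ≤ μ ∧ γ.map Prod.snd = ν ∧ r = ∫ p, d p.1 p.2 ∂γ}

open Classical in
/-- The unbalanced Wasserstein distance w.r.t. a distance function `d`:
`‖μ‖ - ‖ν‖` plus the optimal transport cost over sub-couplings, where w.l.o.g.
`‖μ‖ ≥ ‖ν‖`. -/
def uwDist {X : Type _} [MeasurableSpace X] (d : X → X → ℝ) (μ ν : Measure X) : ℝ :=
  if ν Set.univ ≤ μ Set.univ then uwAux d μ ν else uwAux d ν μ

/-- The classical Wasserstein distance (over couplings) w.r.t. a cost `d`. -/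
def wassersteinDist {X : Type _} [MeasurableSpace X] (d : X → X → ℝ)
    (μ ν : Measure X) : ℝ :=
  sInf {r : ℝ | ∃ γ : Measure (X × X),
    γ.map Prod.fst = μ ∧ γ.map Prod.snd = ν ∧ r = ∫ p, d p.1 p.2 ∂γ}

/-- The iterated unbalanced Wasserstein metrics `W^h` on the spaces `M h`. -/
def Wdist : (h : ℕ) → M h → M h → ℝ
  | 0, _, _ => 0
  | (h+1), α, β => uwDist (Wdist h) (toMeas α) (toMeas β)

/-- Borel probability measures on `X`. -/
abbrev ProbM (X : Type) [MeasurableSpace X] : Type :=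
  {μ : Measure X // IsProbabilityMeasure μ}

/-- The weak topology on Borel probability measures. -/
def probWeakTop (X : Type) [MeasurableSpace X] [TopologicalSpace X] :
    TopologicalSpace (ProbM X) :=
  ⨅ f : BoundedContinuousFunction X ℝ,
    TopologicalSpace.induced (fun μ => ∫ x, f x ∂μ.val) inferInstance

/-!
For a metric bounded by one, a transport plan that leaves mass unmatched can be completed at no
greater cost if unmatched mass is priced at one per unit. So the unbalanced Wasserstein distance is
an infimum over *all* partial couplings, a form that is symmetric and easy to estimate.

For the triangle inequality, two plans are glued along their common marginal only approximately:
over each cell of a countable partition into sets of small diameter, the parts of the two plans are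
coupled by a rescaled product measure, so no disintegration is needed.

A small distance forces integrals of bounded Lipschitz functions to be close, which gives weak
convergence. Conversely, cut two measures into pieces along a fine partition of unity and couple
corresponding pieces: under weak convergence the masses of the pieces converge, so these plans
become cheap. Only countably many test functions occur, hence the space of finite measures is again
second countable and metrized by a metric bounded by one on measures of mass at most one, and the
argument can be iterated. On probability measures the balanced and unbalanced distances agree.
-/

open scoped ENNReal NNReal BoundedContinuousFunction
open Filter Topology TopologicalSpace

section PartialCoupling

variable {α β : Type*} [MeasurableSpace α] [MeasurableSpace β]

/-- A partial coupling of `μ` and `ν`: a transport plan moving part of `μ` onto part of `ν`. -/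
structure IsPartialCoupling (γ : Measure (α × β)) (μ : Measure α) (ν : Measure β) : Prop where
  fst_le : γ.fst ≤ μ
  snd_le : γ.snd ≤ ν

lemma measure_sum_le_sum {ι : Type*} {μ ν : ι → Measure α} (h : ∀ i, μ i ≤ ν i) :
    Measure.sum μ ≤ Measure.sum ν :=
  Measure.le_iff.2 fun s hs => by
    simp only [Measure.sum_apply _ hs]
    exact ENNReal.tsum_le_tsum fun i => h i s

lemma measure_smul_le_self {c : ℝ≥0∞} {μ : Measure α} (hc : c ≤ 1) : c • μ ≤ μ :=
  Measure.le_iff'.2 fun _ => mul_le_of_le_one_left' hc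

namespace IsPartialCoupling

variable {γ π : Measure (α × β)} {μ μ' : Measure α} {ν ν' : Measure β}

lemma zero (μ : Measure α) (ν : Measure β) : IsPartialCoupling (0 : Measure (α × β)) μ ν :=
  ⟨Measure.fst_zero.trans_le (Measure.zero_le μ), Measure.snd_zero.trans_le (Measure.zero_le ν)⟩

lemma univ_le_left (h : IsPartialCoupling γ μ ν) : γ univ ≤ μ univ := by
  rw [← Measure.fst_univ]
  exact h.fst_le univ

lemma univ_le_right (h : IsPartialCoupling γ μ ν) : γ univ ≤ ν univ := by
  rw [← Measure.snd_univ]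
  exact h.snd_le univ

lemma isFiniteMeasure [IsFiniteMeasure μ] (h : IsPartialCoupling γ μ ν) : IsFiniteMeasure γ :=
  ⟨h.univ_le_left.trans_lt (measure_lt_top μ univ)⟩

lemma swap (h : IsPartialCoupling γ μ ν) : IsPartialCoupling (γ.map Prod.swap) ν μ :=
  ⟨by rw [Measure.fst_map_swap]; exact h.snd_le, by rw [Measure.snd_map_swap]; exact h.fst_le⟩

lemma add (h : IsPartialCoupling γ μ ν) (h' : IsPartialCoupling π μ' ν') :
    IsPartialCoupling (γ + π) (μ + μ') (ν + ν') :=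
  ⟨by rw [Measure.fst_add]; exact add_le_add h.fst_le h'.fst_le,
    by rw [Measure.snd_add]; exact add_le_add h.snd_le h'.snd_le⟩

lemma sum {ι : Type*} {γ : ι → Measure (α × β)} {μ : ι → Measure α} {ν : ι → Measure β}
    (h : ∀ i, IsPartialCoupling (γ i) (μ i) (ν i)) :
    IsPartialCoupling (Measure.sum γ) (Measure.sum μ) (Measure.sum ν) := by
  constructor
  · rw [Measure.fst_sum]
    exact measure_sum_le_sum fun i => (h i).fst_le
  · rw [Measure.snd_sum]
    exact measure_sum_le_sum fun i => (h i).snd_le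

lemma lintegral_fst_le (h : IsPartialCoupling γ μ ν) {f : α → ℝ≥0∞} (hf : Measurable f) :
    ∫⁻ p, f p.1 ∂γ ≤ ∫⁻ x, f x ∂μ := by
  rw [← lintegral_map hf measurable_fst]
  exact lintegral_mono' h.fst_le le_rfl

lemma lintegral_snd_le (h : IsPartialCoupling γ μ ν) {f : β → ℝ≥0∞} (hf : Measurable f) :
    ∫⁻ p, f p.2 ∂γ ≤ ∫⁻ y, f y ∂ν := by
  rw [← lintegral_map hf measurable_snd]
  exact lintegral_mono' h.snd_le le_rfl

end IsPartialCoupling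

/-- The product measure, rescaled to the largest partial coupling of `μ` and `ν` proportional
to it; when both masses are zero or one is infinite, `ℝ≥0∞` conventions make it zero. -/
def balancedProd (μ : Measure α) (ν : Measure β) : Measure (α × β) :=
  (max (μ univ) (ν univ))⁻¹ • μ.prod ν

variable {μ : Measure α} {ν : Measure β}

lemma isPartialCoupling_balancedProd [SFinite ν] :
    IsPartialCoupling (balancedProd μ ν) μ ν := by
  have inv_max_mul_le_one {a : ℝ≥0∞} (ha : a ≤ max (μ univ) (ν univ)) :
      (max (μ univ) (ν univ))⁻¹ * a ≤ 1 :=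
    (mul_le_mul_right ha _).trans (ENNReal.inv_mul_le_one _)
  constructor
  · rw [balancedProd, Measure.fst, Measure.map_smul, Measure.map_fst_prod, smul_smul]
    exact measure_smul_le_self (inv_max_mul_le_one (le_max_right _ _))
  · rw [balancedProd, Measure.snd, Measure.map_smul, Measure.map_snd_prod, smul_smul]
    exact measure_smul_le_self (inv_max_mul_le_one (le_max_left _ _))

lemma balancedProd_univ [IsFiniteMeasure μ] [IsFiniteMeasure ν] :
    balancedProd μ ν univ = min (μ univ) (ν univ) := by
  rw [balancedProd, Measure.smul_apply, ← univ_prod_univ, Measure.prod_prod, smul_eq_mul,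
    ← max_mul_min (μ univ) (ν univ), ← mul_assoc]
  rcases eq_or_ne (max (μ univ) (ν univ)) 0 with hmax | hmax
  · rw [nonpos_iff_eq_zero.1 (min_le_max.trans_eq hmax), mul_zero]
  · rw [ENNReal.inv_mul_cancel hmax (by finiteness), one_mul]

lemma ae_balancedProd {p : α → Prop} {q : β → Prop}
    (hp : ∀ᵐ x ∂μ, p x) (hq : ∀ᵐ y ∂ν, q y) :
    ∀ᵐ z ∂balancedProd μ ν, p z.1 ∧ q z.2 :=
  Measure.ae_smul_measure ((Measure.quasiMeasurePreserving_fst.ae hp).and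
    (Measure.quasiMeasurePreserving_snd.ae hq)) _

lemma IsPartialCoupling.exists_extension [IsFiniteMeasure μ] [IsFiniteMeasure ν]
    {γ : Measure (α × β)} (h : IsPartialCoupling γ μ ν) (hle : ν univ ≤ μ univ) :
    ∃ π, (γ + π).fst ≤ μ ∧ (γ + π).snd = ν := by
  have : IsFiniteMeasure γ := h.isFiniteMeasure
  have hμ : γ.fst + (μ - γ.fst) = μ := by rw [add_comm, Measure.sub_add_cancel_of_le h.fst_le]
  have hν : γ.snd + (ν - γ.snd) = ν := by rw [add_comm, Measure.sub_add_cancel_of_le h.snd_le]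
  set π := balancedProd (μ - γ.fst) (ν - γ.snd)
  have hγπ : IsPartialCoupling (γ + π) μ ν := by
    have hγ : IsPartialCoupling γ γ.fst γ.snd := ⟨le_rfl, le_rfl⟩
    simpa only [hμ, hν] using
      hγ.add (isPartialCoupling_balancedProd (μ := μ - γ.fst) (ν := ν - γ.snd))
  have hrest : (ν - γ.snd) univ ≤ (μ - γ.fst) univ := by
    rw [← hμ, ← hν, Measure.add_apply, Measure.add_apply, Measure.fst_univ,
      Measure.snd_univ] at hle
    exact (ENNReal.add_le_add_iff_left (measure_ne_top γ univ)).1 hle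
  refine ⟨π, hγπ.fst_le, ?_⟩
  have : IsFiniteMeasure (γ + π) := hγπ.isFiniteMeasure
  refine Measure.eq_of_le_of_measure_univ_eq hγπ.snd_le ?_
  rw [Measure.snd_univ, Measure.add_apply, balancedProd_univ, min_eq_right hrest,
    ← Measure.snd_univ, ← Measure.add_apply, hν]

end PartialCoupling

section Gluing

variable {α β X : Type*} [MeasurableSpace α] [MeasurableSpace β] [MeasurableSpace X]

lemma measure_sum_restrict_preimage {ι : Type*} [Countable ι] {γ : Measure α} {f : α → X}
    (hf : Measurable f) {A : ι → Set X} (hA : ∀ i, MeasurableSet (A i)) (hcover : ⋃ i, A i = univ)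
    (hdisj : Pairwise fun i j => Disjoint (A i) (A j)) :
    Measure.sum (fun i => γ.restrict (f ⁻¹' A i)) = γ := by
  rw [← Measure.restrict_iUnion (fun i j hij => (hdisj hij).preimage f) (fun i => hf (hA i)),
    ← preimage_iUnion, hcover, preimage_univ, Measure.restrict_univ]

lemma IsPartialCoupling.map_fst_snd {μ : Measure α} {ν : Measure X} {ρ : Measure β}
    {γ₁ : Measure (α × X)} {γ₂ : Measure (X × β)} {κ : Measure ((α × X) × X × β)}
    (h₁ : IsPartialCoupling γ₁ μ ν) (h₂ : IsPartialCoupling γ₂ ν ρ)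
    (hκ : IsPartialCoupling κ γ₁ γ₂) :
    IsPartialCoupling (κ.map fun z => (z.1.1, z.2.2)) μ ρ := by
  have hmeas : Measurable fun z : (α × X) × X × β => (z.1.1, z.2.2) := by fun_prop
  constructor
  · calc (κ.map fun z => (z.1.1, z.2.2)).fst
      _ = κ.fst.fst := by
        simp only [Measure.fst, Measure.map_map measurable_fst hmeas,
          Measure.map_map measurable_fst measurable_fst]
        rfl
      _ ≤ γ₁.fst := Measure.fst_mono hκ.fst_le
      _ ≤ μ := h₁.fst_le
  · calc (κ.map fun z => (z.1.1, z.2.2)).snd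
      _ = κ.snd.snd := by
        simp only [Measure.snd, Measure.map_map measurable_snd hmeas,
          Measure.map_map measurable_snd measurable_snd]
        rfl
      _ ≤ γ₂.snd := Measure.snd_mono hκ.snd_le
      _ ≤ ρ := h₂.snd_le

variable [PseudoMetricSpace X] [OpensMeasurableSpace X] [SecondCountableTopology X]

variable (X) in
lemma exists_measurable_partition_edist_le {ε : ℝ≥0} (hε : 0 < ε) :
    ∃ A : ℕ → Set X, (∀ i, MeasurableSet (A i)) ∧ (∀ i, ∀ x ∈ A i, ∀ y ∈ A i, edist x y ≤ ε) ∧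
      ⋃ i, A i = univ ∧ Pairwise fun i j => Disjoint (A i) (A j) := by
  obtain ⟨A, hA, hbdd, hdiam, hcover, hdisj⟩ :=
    SeparableSpace.exists_measurable_partition_diam_le X (NNReal.coe_pos.2 hε)
  refine ⟨A, hA, fun i x hx y hy => ?_, hcover, hdisj⟩
  rw [edist_nndist, ENNReal.coe_le_coe, ← NNReal.coe_le_coe, coe_nndist]
  exact (Metric.dist_le_diam_of_mem (hbdd i) hx hy).trans (hdiam i)

/-- On a cell `A` of small diameter, `balancedProd` couples the parts of `γ₁` and `γ₂` lying over
`A`. It has mass `min a b` and `a + b = max a b + min a b ≤ ν A + min a b`. -/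
lemma exists_isPartialCoupling_edist_le {γ₁ : Measure α} {γ₂ : Measure β} [IsFiniteMeasure γ₁]
    [IsFiniteMeasure γ₂] {ν : Measure X} {f : α → X} {g : β → X} (hf : Measurable f)
    (hg : Measurable g) (hfν : γ₁.map f ≤ ν) (hgν : γ₂.map g ≤ ν) {ε : ℝ≥0} (hε : 0 < ε) :
    ∃ κ, IsPartialCoupling κ γ₁ γ₂ ∧ γ₁ univ + γ₂ univ ≤ ν univ + κ univ ∧
      ∀ᵐ z ∂κ, edist (f z.1) (g z.2) ≤ ε := by
  obtain ⟨A, hA, hdiam, hcover, hdisj⟩ := exists_measurable_partition_edist_le X hε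
  have hγ₁ := measure_sum_restrict_preimage (γ := γ₁) hf hA hcover hdisj
  have hγ₂ := measure_sum_restrict_preimage (γ := γ₂) hg hA hcover hdisj
  have hν := measure_sum_restrict_preimage (γ := ν) measurable_id hA hcover hdisj
  set κ := fun i => balancedProd (γ₁.restrict (f ⁻¹' A i)) (γ₂.restrict (g ⁻¹' A i))
  have mass_le (i) : γ₁ (f ⁻¹' A i) + γ₂ (g ⁻¹' A i) ≤ ν (A i) + κ i univ := by
    have hfi : γ₁ (f ⁻¹' A i) ≤ ν (A i) := (Measure.map_apply hf (hA i)).symm.trans_le (hfν _)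
    have hgi : γ₂ (g ⁻¹' A i) ≤ ν (A i) := (Measure.map_apply hg (hA i)).symm.trans_le (hgν _)
    rw [balancedProd_univ, Measure.restrict_apply_univ, Measure.restrict_apply_univ,
      ← max_add_min]
    gcongr
    exact max_le hfi hgi
  refine ⟨Measure.sum κ, ?_, ?_, ?_⟩
  · simpa only [hγ₁, hγ₂] using IsPartialCoupling.sum fun i =>
      isPartialCoupling_balancedProd (μ := γ₁.restrict (f ⁻¹' A i))
        (ν := γ₂.restrict (g ⁻¹' A i))
  · rw [← hγ₁, ← hγ₂, ← hν]
    simp only [Measure.sum_apply _ MeasurableSet.univ, Measure.restrict_apply_univ,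
      ← ENNReal.tsum_add]
    exact ENNReal.tsum_le_tsum mass_le
  · refine Measure.ae_sum_iff.2 fun i => ?_
    filter_upwards [ae_balancedProd (ae_restrict_mem (hf (hA i))) (ae_restrict_mem (hg (hA i)))]
      with z hz
    exact hdiam i _ hz.1 _ hz.2

end Gluing

section UnbalancedWasserstein

variable {X : Type*} [MeasurableSpace X]

/-- The cost of a partial coupling `γ` of `μ` and `ν`: the transport cost, plus one per unit of
mass of the larger measure that is left unmatched. -/
def planCost [EDist X] (μ ν : Measure X) (γ : Measure (X × X)) : ℝ≥0∞ :=
  ∫⁻ p, edist p.1 p.2 ∂γ + (max (μ univ) (ν univ) - γ univ)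

/-- The unbalanced Wasserstein distance as an infimum over all partial couplings, valued in
`ℝ≥0∞`; it agrees with `uwDist` when distances and masses are at most one. -/
def uwEDist [EDist X] (μ ν : Measure X) : ℝ≥0∞ :=
  ⨅ (γ) (_ : IsPartialCoupling γ μ ν), planCost μ ν γ

lemma uwEDist_le_planCost [EDist X] {μ ν : Measure X} {γ : Measure (X × X)}
    (h : IsPartialCoupling γ μ ν) : uwEDist μ ν ≤ planCost μ ν γ :=
  iInf₂_le γ h

lemma uwEDist_le_max_univ [EDist X] {μ ν : Measure X} :
    uwEDist μ ν ≤ max (μ univ) (ν univ) := by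
  simpa [planCost] using uwEDist_le_planCost (IsPartialCoupling.zero μ ν)

variable [PseudoMetricSpace X] [OpensMeasurableSpace X] [SecondCountableTopology X]
  {μ ν ρ : Measure X}

lemma uwEDist_self : uwEDist μ μ = 0 := by
  have hdiag : Measurable fun x : X => (x, x) := measurable_id.prodMk measurable_id
  have hcoupling : IsPartialCoupling (μ.map fun x => (x, x)) μ μ := by
    constructor
    · rw [Measure.fst, Measure.map_map measurable_fst hdiag]
      exact Measure.map_id.le
    · rw [Measure.snd, Measure.map_map measurable_snd hdiag]
      exact Measure.map_id.le
  refine nonpos_iff_eq_zero.1 ((uwEDist_le_planCost hcoupling).trans_eq ?_)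
  rw [planCost, lintegral_map measurable_edist hdiag, Measure.map_apply hdiag MeasurableSet.univ]
  simp

lemma planCost_map_swap {γ : Measure (X × X)} :
    planCost ν μ (γ.map Prod.swap) = planCost μ ν γ := by
  rw [planCost, planCost, lintegral_map measurable_edist measurable_swap, max_comm,
    Measure.map_apply measurable_swap MeasurableSet.univ]
  simp only [Prod.fst_swap, Prod.snd_swap, edist_comm, preimage_univ]

lemma uwEDist_comm : uwEDist μ ν = uwEDist ν μ := by
  have uwEDist_le (μ ν : Measure X) : uwEDist μ ν ≤ uwEDist ν μ :=
    le_iInf₂ fun _γ hγ => (uwEDist_le_planCost hγ.swap).trans_eq planCost_map_swap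
  exact le_antisymm (uwEDist_le μ ν) (uwEDist_le ν μ)

lemma le_of_forall_pos_le_add_mul {a b c : ℝ≥0∞} (hc : c ≠ ∞)
    (h : ∀ ε : ℝ≥0, 0 < ε → a ≤ b + ε * c) : a ≤ b := by
  have hcont : Continuous fun ε : ℝ≥0 => b + ε * c :=
    continuous_const.add ((ENNReal.continuous_mul_const hc).comp ENNReal.continuous_coe)
  have hlim : Tendsto (fun ε : ℝ≥0 => b + ε * c) (𝓝[>] 0) (𝓝 b) :=
    (hcont.tendsto' 0 b (by simp)).mono_left nhdsWithin_le_nhds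
  exact ge_of_tendsto hlim (eventually_mem_nhdsWithin.mono h)

lemma max_tsub_le_max_tsub_add_max_tsub {m n r a b k : ℝ≥0∞} (hn : n ≠ ∞) (ham : a ≤ m)
    (hbr : b ≤ r) (h : a + b ≤ n + k) : max m r - k ≤ (max m n - a) + (max n r - b) := by
  rw [tsub_le_iff_right, ← ENNReal.add_le_add_iff_left hn]
  calc n + max m r ≤ max m n + max n r := by
        rcases le_total m r with hmr | hmr
        · rw [max_eq_right hmr]
          exact add_le_add (le_max_right _ _) (le_max_right _ _)
        · rw [max_eq_left hmr, add_comm]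
          exact add_le_add (le_max_left _ _) (le_max_left _ _)
    _ = (max m n - a + a) + (max n r - b + b) := by
        rw [tsub_add_cancel_of_le (ham.trans (le_max_left _ _)),
          tsub_add_cancel_of_le (hbr.trans (le_max_right _ _))]
    _ = (max m n - a) + (max n r - b) + (a + b) := by ring
    _ ≤ (max m n - a) + (max n r - b) + (n + k) := by gcongr
    _ = n + ((max m n - a) + (max n r - b) + k) := by ring

lemma lintegral_edist_map_fst_snd_le {γ₁ γ₂ : Measure (X × X)}
    {κ : Measure ((X × X) × X × X)} (hκ : IsPartialCoupling κ γ₁ γ₂) {ε : ℝ≥0∞}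
    (hε : ∀ᵐ z ∂κ, edist z.1.2 z.2.1 ≤ ε) :
    ∫⁻ p, edist p.1 p.2 ∂(κ.map fun z => (z.1.1, z.2.2)) ≤
      ∫⁻ p, edist p.1 p.2 ∂γ₁ + ∫⁻ p, edist p.1 p.2 ∂γ₂ + ε * κ univ := by
  calc ∫⁻ p, edist p.1 p.2 ∂(κ.map fun z => (z.1.1, z.2.2))
    _ = ∫⁻ z, edist z.1.1 z.2.2 ∂κ := lintegral_map measurable_edist (by fun_prop)
    _ ≤ ∫⁻ z, (edist z.1.1 z.1.2 + edist z.2.1 z.2.2 + ε) ∂κ := by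
      refine lintegral_mono_ae (hε.mono fun z hz => ?_)
      calc edist z.1.1 z.2.2
        _ ≤ edist z.1.1 z.1.2 + edist z.1.2 z.2.1 + edist z.2.1 z.2.2 := edist_triangle4 _ _ _ _
        _ ≤ edist z.1.1 z.1.2 + ε + edist z.2.1 z.2.2 := by gcongr
        _ = edist z.1.1 z.1.2 + edist z.2.1 z.2.2 + ε := add_right_comm _ _ _
    _ = ∫⁻ z, edist z.1.1 z.1.2 ∂κ + ∫⁻ z, edist z.2.1 z.2.2 ∂κ + ε * κ univ := by
      rw [lintegral_add_right _ measurable_const, lintegral_const,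
        lintegral_add_left (f := fun z : (X × X) × X × X => edist z.1.1 z.1.2)
          (by fun_prop)]
    _ ≤ _ := by
      gcongr
      · exact hκ.lintegral_fst_le measurable_edist
      · exact hκ.lintegral_snd_le measurable_edist

lemma uwEDist_triangle [IsFiniteMeasure μ] [IsFiniteMeasure ν] :
    uwEDist μ ρ ≤ uwEDist μ ν + uwEDist ν ρ := by
  refine ENNReal.le_iInf₂_add_iInf₂ fun γ₁ h₁ γ₂ h₂ => ?_
  have := h₁.isFiniteMeasure
  have := h₂.isFiniteMeasure
  refine le_of_forall_pos_le_add_mul (measure_ne_top μ univ) fun ε hε => ?_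
  obtain ⟨κ, hκ, hmass, hκε⟩ := exists_isPartialCoupling_edist_le measurable_snd measurable_fst
    h₁.snd_le h₂.fst_le hε
  have hκμ : κ univ ≤ μ univ := hκ.univ_le_left.trans h₁.univ_le_left
  calc uwEDist μ ρ
    _ ≤ planCost μ ρ (κ.map fun z => (z.1.1, z.2.2)) := uwEDist_le_planCost (h₁.map_fst_snd h₂ hκ)
    _ ≤ (∫⁻ p, edist p.1 p.2 ∂γ₁ + ∫⁻ p, edist p.1 p.2 ∂γ₂ + ε * κ univ) +
        ((max (μ univ) (ν univ) - γ₁ univ) + (max (ν univ) (ρ univ) - γ₂ univ)) := by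
      rw [planCost, Measure.map_apply (by fun_prop) MeasurableSet.univ, preimage_univ]
      gcongr
      · exact lintegral_edist_map_fst_snd_le hκ hκε
      · exact max_tsub_le_max_tsub_add_max_tsub (measure_ne_top ν univ) h₁.univ_le_left
          h₂.univ_le_right hmass
    _ ≤ (∫⁻ p, edist p.1 p.2 ∂γ₁ + ∫⁻ p, edist p.1 p.2 ∂γ₂ + ε * μ univ) +
        ((max (μ univ) (ν univ) - γ₁ univ) + (max (ν univ) (ρ univ) - γ₂ univ)) := by gcongr
    _ = planCost μ ν γ₁ + planCost ν ρ γ₂ + ε * μ univ := by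
      rw [planCost, planCost]
      ring

end UnbalancedWasserstein

section RealValued

variable {X : Type*} [MeasurableSpace X]

lemma wassersteinDist_eq_uwDist (d : X → X → ℝ) (μ ν : Measure X) [IsProbabilityMeasure μ]
    [IsProbabilityMeasure ν] : wassersteinDist d μ ν = uwDist d μ ν := by
  rw [uwDist, if_pos (by simp), uwAux, wassersteinDist]
  simp only [measure_univ, sub_self, zero_add]
  congr! 3 with r
  refine exists_congr fun γ => ?_
  constructor
  · rintro ⟨hμ, hν, hr⟩
    refine ⟨?_, hμ.le, hν, hr⟩
    rw [← Measure.fst_univ, Measure.fst, hμ, measure_univ]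
  · rintro ⟨-, hμ, hν, hr⟩
    have : IsFiniteMeasure (γ.map Prod.fst) := isFiniteMeasure_of_le μ hμ
    refine ⟨Measure.eq_of_le_of_measure_univ_eq hμ ?_, hν, hr⟩
    rw [← Measure.fst, Measure.fst_univ, ← Measure.snd_univ, Measure.snd, hν, measure_univ,
      measure_univ]

variable [PseudoMetricSpace X] {μ ν : Measure X} [IsFiniteMeasure μ]

lemma planCost_add_le (hd : ∀ x y : X, dist x y ≤ 1) {γ π : Measure (X × X)}
    (h : IsPartialCoupling (γ + π) μ ν) : planCost μ ν (γ + π) ≤ planCost μ ν γ := by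
  have hmass : π univ ≤ max (μ univ) (ν univ) - γ univ := by
    have := h.isFiniteMeasure
    have : IsFiniteMeasure γ := isFiniteMeasure_of_le (γ + π) (Measure.le_add_right le_rfl)
    refine ENNReal.le_sub_of_add_le_left (measure_ne_top γ univ) ?_
    exact h.univ_le_left.trans (le_max_left _ _)
  have hcost : ∫⁻ p, edist p.1 p.2 ∂π ≤ π univ := by
    rw [← lintegral_one]
    refine lintegral_mono fun p => ?_
    rw [edist_dist, ENNReal.ofReal_le_one]
    exact hd p.1 p.2
  rw [planCost, planCost, lintegral_add_measure, Measure.add_apply, add_assoc, ← tsub_tsub]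
  gcongr
  calc ∫⁻ p, edist p.1 p.2 ∂π + (max (μ univ) (ν univ) - γ univ - π univ)
    _ ≤ π univ + (max (μ univ) (ν univ) - γ univ - π univ) := by gcongr
    _ = max (μ univ) (ν univ) - γ univ := add_tsub_cancel_of_le hmass

variable [IsFiniteMeasure ν]

lemma IsPartialCoupling.exists_snd_eq_planCost_le (hd : ∀ x y : X, dist x y ≤ 1)
    (hle : ν univ ≤ μ univ) {γ : Measure (X × X)} (h : IsPartialCoupling γ μ ν) :
    ∃ γ' : Measure (X × X), γ'.fst ≤ μ ∧ γ'.snd = ν ∧ planCost μ ν γ' ≤ planCost μ ν γ := by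
  obtain ⟨π, hfst, hsnd⟩ := h.exists_extension hle
  exact ⟨γ + π, hfst, hsnd, planCost_add_le hd ⟨hfst, hsnd.le⟩⟩

variable [OpensMeasurableSpace X] [SecondCountableTopology X]

lemma planCost_eq_ofReal (hd : ∀ x y : X, dist x y ≤ 1) (hle : ν univ ≤ μ univ)
    {γ : Measure (X × X)} (hγ : γ.snd = ν) :
    planCost μ ν γ =
      ENNReal.ofReal ((μ univ).toReal - (ν univ).toReal + ∫ p, dist p.1 p.2 ∂γ) := by
  have hmass : γ univ = ν univ := by rw [← hγ, Measure.snd_univ]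
  have : IsFiniteMeasure γ := ⟨hmass.trans_lt (measure_lt_top ν univ)⟩
  have hint : Integrable (fun p : X × X => dist p.1 p.2) γ :=
    Integrable.of_bound measurable_dist.aestronglyMeasurable 1
      (ae_of_all _ fun p => by simpa using hd p.1 p.2)
  have hcost : ∫⁻ p, edist p.1 p.2 ∂γ = ENNReal.ofReal (∫ p, dist p.1 p.2 ∂γ) := by
    rw [ofReal_integral_eq_lintegral_ofReal hint (ae_of_all _ fun p => dist_nonneg)]
    simp only [edist_dist]
  have hunmatched : μ univ - ν univ = ENNReal.ofReal ((μ univ).toReal - (ν univ).toReal) := by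
    rw [← ENNReal.toReal_sub_of_le hle (by finiteness), ENNReal.ofReal_toReal (by finiteness)]
  rw [planCost, hcost, hmass, max_eq_left hle, hunmatched, add_comm, ENNReal.ofReal_add
    (sub_nonneg.2 (ENNReal.toReal_mono (by finiteness) hle))
    (integral_nonneg fun p => dist_nonneg)]

lemma uwAux_dist_eq_toReal_uwEDist (hd : ∀ x y : X, dist x y ≤ 1) (hμ : μ univ ≤ 1)
    (hle : ν univ ≤ μ univ) : uwAux dist μ ν = (uwEDist μ ν).toReal := by
  set S := {r : ℝ | ∃ γ : Measure (X × X), γ univ ≤ 1 ∧ γ.map Prod.fst ≤ μ ∧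
    γ.map Prod.snd = ν ∧ r = ∫ p, dist p.1 p.2 ∂γ} with hS
  have mem_S {γ : Measure (X × X)} (hfst : γ.fst ≤ μ) (hsnd : γ.snd = ν) :
      ∫ p, dist p.1 p.2 ∂γ ∈ S := by
    refine ⟨γ, ?_, hfst, hsnd, rfl⟩
    rw [← Measure.snd_univ, hsnd]
    exact hle.trans hμ
  have uwEDist_ne_top : uwEDist μ ν ≠ ∞ := ne_top_of_le_ne_top (by finiteness) uwEDist_le_max_univ
  rw [uwAux, ← hS]
  apply le_antisymm
  · refine (ENNReal.ofReal_le_iff_le_toReal uwEDist_ne_top).1 (le_iInf₂ fun γ hγ => ?_)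
    obtain ⟨γ', hfst, hsnd, hcost⟩ := hγ.exists_snd_eq_planCost_le hd hle
    refine le_trans ?_ hcost
    rw [planCost_eq_ofReal hd hle hsnd]
    gcongr
    refine csInf_le ⟨0, ?_⟩ (mem_S hfst hsnd)
    rintro _ ⟨-, -, -, -, rfl⟩
    exact integral_nonneg fun p => dist_nonneg
  · obtain ⟨γ₀, hfst₀, hsnd₀, -⟩ := (IsPartialCoupling.zero μ ν).exists_snd_eq_planCost_le hd hle
    rw [← sub_le_iff_le_add']
    refine le_csInf ⟨_, mem_S hfst₀ hsnd₀⟩ ?_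
    rintro _ ⟨γ, -, hfst, hsnd, rfl⟩
    rw [sub_le_iff_le_add']
    refine ENNReal.toReal_le_of_le_ofReal ?_ ?_
    · exact add_nonneg (sub_nonneg.2 (ENNReal.toReal_mono (by finiteness) hle))
        (integral_nonneg fun p => dist_nonneg)
    · rw [← planCost_eq_ofReal hd hle hsnd]
      exact uwEDist_le_planCost ⟨hfst, hsnd.le⟩

lemma uwDist_dist_eq_toReal_uwEDist (hd : ∀ x y : X, dist x y ≤ 1) (hμ : μ univ ≤ 1)
    (hν : ν univ ≤ 1) : uwDist dist μ ν = (uwEDist μ ν).toReal := by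
  rw [uwDist]
  split_ifs with hle
  · exact uwAux_dist_eq_toReal_uwEDist hd hμ hle
  · rw [uwAux_dist_eq_toReal_uwEDist hd hν (not_le.1 hle).le, uwEDist_comm]

end RealValued

section TendstoOfUwEDist

variable {X ι : Type*} [MeasurableSpace X] [PseudoMetricSpace X] [OpensMeasurableSpace X]

lemma tendsto_finiteMeasure_of_forall_lipschitz_integral_tendsto {F : Filter ι}
    [F.IsCountablyGenerated] {μs : ι → FiniteMeasure X} {μ : FiniteMeasure X}
    (h : ∀ (f : X → ℝ) (C : ℝ) (K : ℝ≥0), (∀ x, |f x| ≤ C) → LipschitzWith K f →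
      Tendsto (fun i => ∫ x, f x ∂(μs i : Measure X)) F (𝓝 (∫ x, f x ∂(μ : Measure X)))) :
    Tendsto μs F (𝓝 μ) := by
  have hmass : Tendsto (fun i => ((μs i).mass : ℝ)) F (𝓝 μ.mass) := by
    simpa using! h (fun _ => 1) 1 0 (by simp) (LipschitzWith.const 1)
  rcases eq_or_ne μ 0 with rfl | hμ
  · exact FiniteMeasure.tendsto_zero_of_tendsto_zero_mass (NNReal.tendsto_coe.1 hmass)
  have : Nonempty X :=
    not_isEmpty_iff.1 fun _ => hμ (Subtype.ext (Measure.eq_zero_of_isEmpty _))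
  have integral_normalize {ν : FiniteMeasure X} (hν : ν ≠ 0) (f : X → ℝ) :
      ∫ x, f x ∂(ν.normalize : Measure X) = (ν.mass : ℝ)⁻¹ * ∫ x, f x ∂(ν : Measure X) := by
    rw [← ν.average_eq_integral_normalize hν, average_eq]
    rfl
  have hmass_ne : (μ.mass : ℝ) ≠ 0 := NNReal.coe_ne_zero.2 (μ.mass_nonzero_iff.2 hμ)
  have hμs : ∀ᶠ i in F, μs i ≠ 0 := (hmass.eventually_ne hmass_ne).mono fun i hi =>
    (μs i).mass_nonzero_iff.1 (NNReal.coe_ne_zero.1 hi)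
  refine FiniteMeasure.tendsto_of_tendsto_normalize_testAgainstNN_of_tendsto_mass ?_
    (NNReal.tendsto_coe.1 hmass)
  refine tendsto_iff_forall_lipschitz_integral_tendsto.2 fun f ⟨C, hC⟩ ⟨K, hK⟩ => ?_
  let x₀ : X := Classical.arbitrary X
  have hbound (x) : |f x| ≤ |f x₀| + C := by
    have habs := abs_sub_abs_le_abs_sub (f x) (f x₀)
    have hdist := hC x x₀
    rw [Real.dist_eq] at hdist
    linarith
  rw [integral_normalize hμ]
  refine ((hmass.inv₀ hmass_ne).mul (h f _ K hbound hK)).congr' ?_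
  exact hμs.mono fun i hi => (integral_normalize hi f).symm

variable [SecondCountableTopology X]

lemma lintegral_le_lintegral_add_mul_planCost {μ ν : Measure X} [IsFiniteMeasure μ]
    {f : X → ℝ≥0∞} (hf : Measurable f) {K : ℝ≥0∞} (hK : ∀ x, f x ≤ K)
    (hlip : ∀ x y, f x ≤ f y + K * edist x y) {γ : Measure (X × X)}
    (hγ : IsPartialCoupling γ μ ν) :
    ∫⁻ x, f x ∂μ ≤ ∫⁻ x, f x ∂ν + K * planCost μ ν γ := by
  have := hγ.isFiniteMeasure
  have hmatched : ∫⁻ x, f x ∂γ.fst ≤ ∫⁻ x, f x ∂ν + K * ∫⁻ p, edist p.1 p.2 ∂γ := by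
    calc ∫⁻ x, f x ∂γ.fst
      _ = ∫⁻ p, f p.1 ∂γ := lintegral_map hf measurable_fst
      _ ≤ ∫⁻ p, (f p.2 + K * edist p.1 p.2) ∂γ := lintegral_mono fun p => hlip p.1 p.2
      _ = ∫⁻ p, f p.2 ∂γ + K * ∫⁻ p, edist p.1 p.2 ∂γ := by
        rw [lintegral_add_left (f := fun p : X × X => f p.2) (hf.comp measurable_snd),
          lintegral_const_mul _ measurable_edist]
      _ ≤ ∫⁻ x, f x ∂ν + K * ∫⁻ p, edist p.1 p.2 ∂γ := by
        gcongr
        exact hγ.lintegral_snd_le hf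
  have hunmatched : ∫⁻ x, f x ∂(μ - γ.fst) ≤ K * (max (μ univ) (ν univ) - γ univ) := by
    calc ∫⁻ x, f x ∂(μ - γ.fst)
      _ ≤ K * (μ - γ.fst) univ := by
        rw [← lintegral_const]
        exact lintegral_mono hK
      _ = K * (μ univ - γ univ) := by
        rw [Measure.sub_apply MeasurableSet.univ hγ.fst_le, Measure.fst_univ]
      _ ≤ K * (max (μ univ) (ν univ) - γ univ) := by
        gcongr
        exact le_max_left _ _
  calc ∫⁻ x, f x ∂μ
    _ = ∫⁻ x, f x ∂γ.fst + ∫⁻ x, f x ∂(μ - γ.fst) := by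
      rw [← lintegral_add_measure, add_comm, Measure.sub_add_cancel_of_le hγ.fst_le]
    _ ≤ (∫⁻ x, f x ∂ν + K * ∫⁻ p, edist p.1 p.2 ∂γ) +
        K * (max (μ univ) (ν univ) - γ univ) := add_le_add hmatched hunmatched
    _ = ∫⁻ x, f x ∂ν + K * planCost μ ν γ := by rw [planCost, mul_add, add_assoc]

lemma lintegral_le_lintegral_add_mul_uwEDist {μ ν : Measure X} [IsFiniteMeasure μ]
    {f : X → ℝ≥0∞} (hf : Measurable f) {K : ℝ≥0} (hK : ∀ x, f x ≤ K)
    (hlip : ∀ x y, f x ≤ f y + K * edist x y) :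
    ∫⁻ x, f x ∂μ ≤ ∫⁻ x, f x ∂ν + K * uwEDist μ ν := by
  rcases eq_or_ne K 0 with rfl | hK₀
  · have hf₀ : f = 0 := funext fun x => nonpos_iff_eq_zero.1 (hK x)
    simp [hf₀]
  rw [← tsub_le_iff_left, uwEDist]
  simp only [ENNReal.mul_iInf_of_ne (ENNReal.coe_ne_zero.2 hK₀) ENNReal.coe_ne_top]
  exact le_iInf₂ fun γ hγ =>
    tsub_le_iff_left.2 (lintegral_le_lintegral_add_mul_planCost hf hK hlip hγ)

lemma tendsto_lintegral_of_tendsto_uwEDist {F : Filter ι} {μs : ι → FiniteMeasure X}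
    {μ : FiniteMeasure X}
    (h : Tendsto (fun i => uwEDist (μ : Measure X) (μs i : Measure X)) F (𝓝 0))
    {f : X → ℝ≥0∞} (hf : Measurable f) {K : ℝ≥0} (hK : ∀ x, f x ≤ K)
    (hlip : ∀ x y, f x ≤ f y + K * edist x y) :
    Tendsto (fun i => ∫⁻ x, f x ∂(μs i : Measure X)) F (𝓝 (∫⁻ x, f x ∂(μ : Measure X))) := by
  have hKh : Tendsto (fun i => K * uwEDist (μ : Measure X) (μs i : Measure X)) F (𝓝 0) := by
    simpa using ENNReal.Tendsto.const_mul h (Or.inr (ENNReal.coe_ne_top (r := K)))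
  have hfin : ∫⁻ x, f x ∂(μ : Measure X) ≠ ∞ :=
    ((lintegral_mono hK).trans_lt (by simp [ENNReal.mul_lt_top])).ne
  refine tendsto_of_tendsto_of_tendsto_of_le_of_le
    (g := fun i => ∫⁻ x, f x ∂(μ : Measure X) - K * uwEDist (μ : Measure X) (μs i : Measure X))
    (h := fun i => ∫⁻ x, f x ∂(μ : Measure X) + K * uwEDist (μ : Measure X) (μs i : Measure X))
    (by simpa using ENNReal.Tendsto.sub tendsto_const_nhds hKh (Or.inl hfin))
    (by simpa using tendsto_const_nhds.add hKh) (fun i => ?_) (fun i => ?_)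
  · exact tsub_le_iff_right.2 (lintegral_le_lintegral_add_mul_uwEDist hf hK hlip)
  · simp only [uwEDist_comm (μ := (μ : Measure X))]
    exact lintegral_le_lintegral_add_mul_uwEDist hf hK hlip

lemma tendsto_toReal_lintegral_ofReal_of_tendsto_uwEDist {F : Filter ι}
    {μs : ι → FiniteMeasure X} {μ : FiniteMeasure X}
    (h : Tendsto (fun i => uwEDist (μ : Measure X) (μs i : Measure X)) F (𝓝 0))
    {f : X → ℝ} {C : ℝ} {K : ℝ≥0} (hC : ∀ x, f x ≤ C) (hK : LipschitzWith K f) :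
    Tendsto (fun i => (∫⁻ x, ENNReal.ofReal (f x) ∂(μs i : Measure X)).toReal) F
      (𝓝 (∫⁻ x, ENNReal.ofReal (f x) ∂(μ : Measure X)).toReal) := by
  have hbound (x) : ENNReal.ofReal (f x) ≤ (max C.toNNReal K : ℝ≥0) :=
    (ENNReal.ofReal_le_ofReal (hC x)).trans (ENNReal.coe_le_coe.2 (le_max_left _ _))
  have hlip (x y) :
      ENNReal.ofReal (f x) ≤ ENNReal.ofReal (f y) + (max C.toNNReal K : ℝ≥0) * edist x y := by
    calc ENNReal.ofReal (f x)
      _ ≤ ENNReal.ofReal (f y + K * dist x y) := ENNReal.ofReal_le_ofReal (hK.le_add_mul x y)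
      _ ≤ ENNReal.ofReal (f y) + ENNReal.ofReal (K * dist x y) := ENNReal.ofReal_add_le
      _ = ENNReal.ofReal (f y) + K * edist x y := by
        rw [ENNReal.ofReal_mul K.coe_nonneg, ENNReal.ofReal_coe_nnreal, edist_dist]
      _ ≤ ENNReal.ofReal (f y) + (max C.toNNReal K : ℝ≥0) * edist x y := by
        gcongr
        exact le_max_right _ _
  have hfin : ∫⁻ x, ENNReal.ofReal (f x) ∂(μ : Measure X) ≠ ∞ :=
    ((lintegral_mono hbound).trans_lt (by simp [ENNReal.mul_lt_top])).ne
  exact (ENNReal.tendsto_toReal hfin).comp (tendsto_lintegral_of_tendsto_uwEDist h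
    (ENNReal.measurable_ofReal.comp hK.continuous.measurable) hbound hlip)

lemma tendsto_of_tendsto_uwEDist {F : Filter ι} [F.IsCountablyGenerated]
    {μs : ι → FiniteMeasure X} {μ : FiniteMeasure X}
    (h : Tendsto (fun i => uwEDist (μ : Measure X) (μs i : Measure X)) F (𝓝 0)) :
    Tendsto μs F (𝓝 μ) := by
  refine tendsto_finiteMeasure_of_forall_lipschitz_integral_tendsto fun f C K hC hK => ?_
  have hint (ν : FiniteMeasure X) : Integrable f (ν : Measure X) :=
    Integrable.of_bound hK.continuous.measurable.aestronglyMeasurable C (ae_of_all _ hC)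
  simp only [integral_eq_lintegral_pos_part_sub_lintegral_neg_part (hint _)]
  have hpos := tendsto_toReal_lintegral_ofReal_of_tendsto_uwEDist h
    (fun x => (le_abs_self _).trans (hC x)) hK
  have hneg := tendsto_toReal_lintegral_ofReal_of_tendsto_uwEDist h
    (fun x => (neg_le_abs _).trans (hC x)) hK.neg
  exact hpos.sub hneg

end TendstoOfUwEDist

section UwEDistOfTendsto

variable {X ι κ : Type*} [PseudoMetricSpace X]

/-- A partition of unity into bounded continuous functions, each vanishing off a set of diameter
at most `δ`. The sum is taken in `ℝ≥0∞`, so that no summability has to be assumed. -/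
structure IsFinePartitionOfUnity (δ : ℝ≥0∞) (c : ι → X →ᵇ ℝ≥0) : Prop where
  tsum_eq_one : ∀ x, ∑' i, (c i x : ℝ≥0∞) = 1
  edist_le : ∀ ⦃i x y⦄, c i x ≠ 0 → c i y ≠ 0 → edist x y ≤ δ

lemma exists_isFinePartitionOfUnity {s : Set X} (hs : Dense s) {ε : ℝ≥0} (hε : 0 < ε) :
    ∃ c : s → X →ᵇ ℝ≥0, IsFinePartitionOfUnity ε c := by
  have hcover : (univ : Set X) ⊆ ⋃ a : s, Metric.eball (a : X) (ε / 2) := fun x _ => by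
    obtain ⟨a, ha, hxa⟩ := EMetric.mem_closure_iff.1 (hs x) (ε / 2) (by simpa using hε.ne')
    exact mem_iUnion.2 ⟨⟨a, ha⟩, hxa⟩
  obtain ⟨f, hf⟩ := PartitionOfUnity.exists_isSubordinate isClosed_univ _
    (fun _ => Metric.isOpen_eball) hcover
  let c (a : s) : X →ᵇ ℝ≥0 :=
    .mkOfBound ⟨fun x => (f a x).toNNReal, by fun_prop⟩ 1 fun x y => by
      simpa [NNReal.dist_eq, f.nonneg] using
        abs_sub_le_of_nonneg_of_le (f.nonneg a x) (f.le_one a x) (f.nonneg a y) (f.le_one a y)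
  have hmem {a : s} {x : X} (hx : c a x ≠ 0) : edist x a < ε / 2 :=
    hf a (subset_tsupport _ fun hfx => hx (Real.toNNReal_eq_zero.2 hfx.le))
  refine ⟨c, fun x => ?_, fun a x y hx hy => ?_⟩
  · have hfin : (Function.support fun a => f a x).Finite := f.locallyFinite.point_finite x
    calc ∑' a, (c a x : ℝ≥0∞)
      _ = ENNReal.ofReal (∑' a, f a x) :=
        (ENNReal.ofReal_tsum_of_nonneg (f.nonneg · x) (summable_of_hasFiniteSupport hfin)).symm
      _ = 1 := by rw [tsum_eq_finsum hfin, f.sum_eq_one (mem_univ x), ENNReal.ofReal_one]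
  · calc edist x y
      _ ≤ edist x a + edist y a := edist_triangle_right _ _ _
      _ ≤ ε / 2 + ε / 2 := add_le_add (hmem hx).le (hmem hy).le
      _ = ε := ENNReal.add_halves _

variable (X) in
lemma exists_isFinePartitionOfUnity_seq [SecondCountableTopology X] :
    ∃ (s : Set X) (_ : Countable s) (δ : ℕ → ℝ≥0∞) (c : ℕ → s → X →ᵇ ℝ≥0), Tendsto δ atTop (𝓝 0) ∧
      ∀ k, IsFinePartitionOfUnity (δ k) (c k) := by
  obtain ⟨s, hs, hdense⟩ := TopologicalSpace.exists_countable_dense X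
  obtain ⟨ε, -, hε, hlim⟩ := exists_seq_strictAnti_tendsto (0 : ℝ≥0)
  choose c hc using fun k => exists_isFinePartitionOfUnity hdense (hε k)
  exact ⟨s, hs, fun k => ε k, c, ENNReal.tendsto_coe.2 hlim, hc⟩

variable [MeasurableSpace X] [OpensMeasurableSpace X]

namespace IsFinePartitionOfUnity

variable [Countable ι] {δ : ℝ≥0∞} {c : ι → X →ᵇ ℝ≥0} {μ ν : Measure X}

lemma sum_withDensity (hc : IsFinePartitionOfUnity δ c) (μ : Measure X) :
    Measure.sum (fun i => μ.withDensity fun x => c i x) = μ := by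
  rw [← withDensity_tsum fun i => (c i).continuous.measurable.coe_nnreal_ennreal]
  have hone : ∑' i, (fun x => (c i x : ℝ≥0∞)) = 1 :=
    funext fun x => ENNReal.tsum_apply.trans (hc.tsum_eq_one x)
  rw [hone, withDensity_one]

lemma tsum_lintegral (hc : IsFinePartitionOfUnity δ c) (μ : Measure X) :
    ∑' i, ∫⁻ x, c i x ∂μ = μ univ := by
  conv_rhs => rw [← hc.sum_withDensity μ, Measure.sum_apply _ MeasurableSet.univ]
  simp only [withDensity_apply _ MeasurableSet.univ, Measure.restrict_univ]

lemma uwEDist_le [IsFiniteMeasure μ] [IsFiniteMeasure ν] (hc : IsFinePartitionOfUnity δ c) :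
    uwEDist μ ν ≤ δ * μ univ + (max (μ univ) (ν univ) -
      ∑' i, min (∫⁻ x, c i x ∂μ) (∫⁻ x, c i x ∂ν)) := by
  have hfin (i) (ρ : Measure X) [IsFiniteMeasure ρ] :
      IsFiniteMeasure (ρ.withDensity fun x => c i x) :=
    isFiniteMeasure_withDensity ((c i).lintegral_lt_top_of_nnreal ρ).ne
  let γ (i) := balancedProd (μ.withDensity fun x => c i x) (ν.withDensity fun x => c i x)
  have hγ : IsPartialCoupling (Measure.sum γ) μ ν := by
    simpa only [hc.sum_withDensity] using
      IsPartialCoupling.sum fun i => (isPartialCoupling_balancedProd :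
        IsPartialCoupling (γ i) (μ.withDensity fun x => c i x) (ν.withDensity fun x => c i x))
  have hmass : Measure.sum γ univ = ∑' i, min (∫⁻ x, c i x ∂μ) (∫⁻ x, c i x ∂ν) := by
    simp only [γ, Measure.sum_apply _ MeasurableSet.univ, balancedProd_univ,
      withDensity_apply _ MeasurableSet.univ, Measure.restrict_univ]
  have hae (i) (ρ : Measure X) : ∀ᵐ x ∂(ρ.withDensity fun x => c i x), c i x ≠ 0 :=
    (ae_withDensity_iff (c i).continuous.measurable.coe_nnreal_ennreal).2
      (ae_of_all _ fun _ hx => ENNReal.coe_ne_zero.1 hx)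
  have hedist : ∀ᵐ p ∂Measure.sum γ, edist p.1 p.2 ≤ δ :=
    Measure.ae_sum_iff.2 fun i => (ae_balancedProd (hae i μ) (hae i ν)).mono fun _ hp =>
      hc.edist_le hp.1 hp.2
  calc uwEDist μ ν
    _ ≤ planCost μ ν (Measure.sum γ) := uwEDist_le_planCost hγ
    _ ≤ δ * Measure.sum γ univ + (max (μ univ) (ν univ) - Measure.sum γ univ) := by
      rw [planCost, ← lintegral_const]
      gcongr ?_ + _
      exact lintegral_mono_ae hedist
    _ ≤ _ := by
      rw [← hmass]
      gcongr
      exact hγ.univ_le_left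

end IsFinePartitionOfUnity

lemma tendsto_tsum_min {F : Filter κ} {a : ι → ℝ≥0∞} {b : κ → ι → ℝ≥0∞}
    (h : ∀ i, Tendsto (fun j => b j i) F (𝓝 (a i))) :
    Tendsto (fun j => ∑' i, min (a i) (b j i)) F (𝓝 (∑' i, a i)) := by
  have hmin : Tendsto (fun j i => min (a i) (b j i)) F (𝓝 a) :=
    tendsto_pi_nhds.2 fun i => by simpa using (tendsto_const_nhds (x := a i)).min (h i)
  have hlsc : LowerSemicontinuous fun g : ι → ℝ≥0∞ => ∑' i, g i :=
    lowerSemicontinuous_tsum fun i => (continuous_apply i).lowerSemicontinuous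
  exact tendsto_order.2 ⟨fun r hr => hmin.eventually (hlsc a r hr), fun r hr =>
    .of_forall fun j => (ENNReal.tsum_le_tsum fun i => min_le_left _ _).trans_lt hr⟩

lemma tendsto_uwEDist_zero [Countable ι] {δ : ℕ → ℝ≥0∞} (hδ : Tendsto δ atTop (𝓝 0))
    {c : ℕ → ι → X →ᵇ ℝ≥0} (hc : ∀ k, IsFinePartitionOfUnity (δ k) (c k)) {F : Filter κ}
    {μs : κ → FiniteMeasure X} {μ : FiniteMeasure X}
    (hmass : Tendsto (fun j => (μs j).mass) F (𝓝 μ.mass))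
    (htest : ∀ k i,
      Tendsto (fun j => (μs j).testAgainstNN (c k i)) F (𝓝 (μ.testAgainstNN (c k i)))) :
    Tendsto (fun j => uwEDist (μ : Measure X) (μs j : Measure X)) F (𝓝 0) := by
  let bound (k : ℕ) (j : κ) : ℝ≥0∞ := δ k * (μ : Measure X) univ +
    (max ((μ : Measure X) univ) ((μs j : Measure X) univ) -
      ∑' i, min (∫⁻ x, c k i x ∂(μ : Measure X)) (∫⁻ x, c k i x ∂(μs j : Measure X)))
  have hmass' : Tendsto (fun j => (μs j : Measure X) univ) F (𝓝 ((μ : Measure X) univ)) := by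
    simpa only [FiniteMeasure.ennreal_mass] using ENNReal.tendsto_coe.2 hmass
  have hbound (k) : Tendsto (bound k) F (𝓝 (δ k * (μ : Measure X) univ)) := by
    have hmax : Tendsto (fun j => max ((μ : Measure X) univ) ((μs j : Measure X) univ)) F
        (𝓝 ((μ : Measure X) univ)) := by
      simpa using (tendsto_const_nhds (x := (μ : Measure X) univ)).max hmass'
    have hmin := tendsto_tsum_min fun i => by
      simpa only [FiniteMeasure.testAgainstNN_coe_eq] using ENNReal.tendsto_coe.2 (htest k i)
    rw [(hc k).tsum_lintegral] at hmin
    simpa using tendsto_const_nhds.add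
      (ENNReal.Tendsto.sub hmax hmin (Or.inl (measure_ne_top (μ : Measure X) univ)))
  have hδμ : Tendsto (fun k => δ k * (μ : Measure X) univ) atTop (𝓝 0) := by
    simpa using ENNReal.Tendsto.mul_const hδ (Or.inr (measure_ne_top (μ : Measure X) univ))
  refine tendsto_order.2 ⟨fun r hr => absurd hr not_lt_zero, fun r hr => ?_⟩
  obtain ⟨k, hk⟩ := (hδμ.eventually_lt_const hr).exists
  exact ((hbound k).eventually_lt_const hk).mono fun j hj => (hc k).uwEDist_le.trans_lt hj

end UwEDistOfTendsto

section FiniteMeasureTopology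

variable {X : Type*} [MeasurableSpace X] [PseudoMetricSpace X] [OpensMeasurableSpace X]
  [SecondCountableTopology X]

lemma nhds_eq_comap_uwEDist (μ : FiniteMeasure X) :
    𝓝 μ = comap (fun ν : FiniteMeasure X => uwEDist (μ : Measure X) (ν : Measure X)) (𝓝 0) := by
  obtain ⟨s, _, δ, c, hδ, hc⟩ := exists_isFinePartitionOfUnity_seq X
  refine le_antisymm (tendsto_iff_comap.1 ?_) (tendsto_of_tendsto_uwEDist tendsto_comap)
  exact tendsto_uwEDist_zero hδ hc FiniteMeasure.continuous_mass.continuousAt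
    fun k i => (FiniteMeasure.continuous_testAgainstNN_eval (c k i)).continuousAt

lemma eq_of_uwEDist_eq_zero [BorelSpace X] {μ ν : FiniteMeasure X}
    (h : uwEDist (μ : Measure X) (ν : Measure X) = 0) : μ = ν := by
  have hν : Tendsto (fun _ : Unit => ν) ⊤ (𝓝 μ) := by
    rw [nhds_eq_comap_uwEDist, tendsto_comap_iff]
    simp [Function.comp_def, h]
  exact tendsto_nhds_unique tendsto_const_nhds hν |>.symm

end FiniteMeasureTopology

lemma secondCountableTopology_finiteMeasure {X : Type*} [TopologicalSpace X]
    [PseudoMetrizableSpace X] [SecondCountableTopology X] [MeasurableSpace X]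
    [OpensMeasurableSpace X] : SecondCountableTopology (FiniteMeasure X) := by
  let := pseudoMetrizableSpacePseudoMetric X
  obtain ⟨s, _, δ, c, hδ, hc⟩ := exists_isFinePartitionOfUnity_seq X
  let Φ (μ : FiniteMeasure X) : ℝ≥0 × (ℕ → s → ℝ≥0) :=
    (μ.mass, fun k i => μ.testAgainstNN (c k i))
  have hΦ : Continuous Φ := FiniteMeasure.continuous_mass.prodMk <|
    continuous_pi fun k => continuous_pi fun i =>
      FiniteMeasure.continuous_testAgainstNN_eval (c k i)
  refine (isInducing_iff_nhds.2 fun μ => le_antisymm hΦ.continuousAt.le_comap ?_ :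
    IsInducing Φ).secondCountableTopology
  have hlim : Tendsto Φ (comap Φ (𝓝 (Φ μ))) (𝓝 (Φ μ)) := tendsto_comap
  exact tendsto_of_tendsto_uwEDist <| tendsto_uwEDist_zero hδ hc hlim.fst_nhds fun k i =>
    tendsto_pi_nhds.1 (tendsto_pi_nhds.1 hlim.snd_nhds k) i

lemma iInf_induced_integral_eq_induced {X S : Type*} [TopologicalSpace X] [MeasurableSpace X]
    [OpensMeasurableSpace X] (m : S → FiniteMeasure X) :
    ⨅ f : X →ᵇ ℝ, induced (fun s => ∫ x, f x ∂(m s : Measure X)) inferInstance =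
      induced m inferInstance := by
  refine le_antisymm (continuous_iff_le_induced.1 ?_) (le_iInf fun f => ?_)
  · let := ⨅ f : X →ᵇ ℝ, induced (fun s => ∫ x, f x ∂(m s : Measure X)) inferInstance
    exact FiniteMeasure.continuous_iff_forall_continuous_integral.2 fun f =>
      continuous_iInf_dom continuous_induced_dom
  · let := induced m inferInstance
    exact continuous_iff_le_induced.1
      ((FiniteMeasure.continuous_integral_boundedContinuousFunction f).comp continuous_induced_dom)

section Metrizes

variable {X S : Type*}

lemma ballTop_dist [PseudoMetricSpace X] :
    ballTop (dist : X → X → ℝ) = UniformSpace.toTopologicalSpace := by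
  refine le_antisymm (fun U hU => ?_) (le_generateFrom ?_)
  · let := ballTop (dist : X → X → ℝ)
    refine isOpen_iff_mem_nhds.2 fun x hx => ?_
    obtain ⟨r, hr, hrU⟩ := Metric.isOpen_iff.1 hU x hx
    have hball : IsOpen {y | dist x y < r} :=
      isOpen_generateFrom_of_mem ⟨x, r, hr, rfl⟩
    refine mem_of_superset (hball.mem_nhds ?_) fun y hy => hrU (Metric.mem_ball'.2 hy)
    rwa [mem_ofPred_eq, dist_self]
  · rintro _ ⟨x, r, -, rfl⟩
    exact isOpen_lt (continuous_const.dist continuous_id) continuous_const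

lemma IsMetric.exists_metricSpace {d : X → X → ℝ} (hd : IsMetric d) :
    ∃ m : MetricSpace X, m.dist = d ∧ m.toUniformSpace.toTopologicalSpace = ballTop d := by
  obtain ⟨-, hcomm, hzero, htriangle⟩ := hd
  let m : MetricSpace X :=
    { dist := d
      dist_self := fun x => (hzero x x).2 rfl
      dist_comm := hcomm
      dist_triangle := htriangle
      eq_of_dist_eq_zero := (hzero _ _).1 }
  exact ⟨m, rfl, ballTop_dist.symm⟩

lemma IsMetric.eq_ballTop_of_nhds_eq_comap [t : TopologicalSpace X] {d : X → X → ℝ}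
    (hd : IsMetric d) (h : ∀ x : X, 𝓝 x = comap (d x) (𝓝 0)) : t = ballTop d := by
  obtain ⟨m, rfl, htop⟩ := hd.exists_metricSpace
  refine htop ▸ TopologicalSpace.ext_nhds fun x => ?_
  rw [h x]
  simpa only [dist_comm _ x] using nhds_comap_dist x

/-- `d` is a metric with values in `[0, 1]` that induces the topology of `X`. -/
structure UnitMetrizes [t : TopologicalSpace X] (d : X → X → ℝ) : Prop where
  isMetric : IsMetric d
  le_one : ∀ x y, d x y ≤ 1
  topology_eq : t = ballTop d

lemma comap_toReal_nhds_zero {f : S → ℝ≥0∞} (hf : ∀ s, f s ≠ ∞) :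
    comap (fun s => (f s).toReal) (𝓝 0) = comap f (𝓝 0) := by
  refine le_antisymm (tendsto_iff_comap.1 ?_) (tendsto_iff_comap.1 ?_)
  · exact (ENNReal.tendsto_toReal_zero_iff hf).1 tendsto_comap
  · exact (ENNReal.tendsto_toReal_zero_iff hf).2 tendsto_comap

lemma isMetric_toReal_uwEDist [PseudoMetricSpace X] [MeasurableSpace X] [BorelSpace X]
    [SecondCountableTopology X] {m : S → FiniteMeasure X} (hm : Function.Injective m)
    (hfin : ∀ s t, uwEDist (m s : Measure X) (m t : Measure X) ≠ ∞) :
    IsMetric fun s t => (uwEDist (m s : Measure X) (m t : Measure X)).toReal := by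
  refine ⟨fun _ _ => ENNReal.toReal_nonneg, fun _ _ => congrArg ENNReal.toReal uwEDist_comm,
    fun s t => ⟨fun h => ?_, ?_⟩, fun s t u => ?_⟩
  · exact hm (eq_of_uwEDist_eq_zero
      (((ENNReal.toReal_eq_zero_iff _).1 h).resolve_right (hfin s t)))
  · rintro rfl
    exact (ENNReal.toReal_eq_zero_iff _).2 (Or.inl uwEDist_self)
  · rw [← ENNReal.toReal_add (hfin s t) (hfin t u)]
    exact ENNReal.toReal_mono (ENNReal.add_ne_top.2 ⟨hfin s t, hfin t u⟩) uwEDist_triangle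

variable [TopologicalSpace S]

lemma UnitMetrizes.metrizableSpace {d : S → S → ℝ} (hd : UnitMetrizes d) :
    MetrizableSpace S := by
  obtain ⟨m, -, htop⟩ := hd.isMetric.exists_metricSpace
  obtain rfl := hd.topology_eq.trans htop.symm
  infer_instance

variable [MeasurableSpace X]

lemma unitMetrizes_uwDist_dist [PseudoMetricSpace X] [BorelSpace X] [SecondCountableTopology X]
    (hdist : ∀ x y : X, dist x y ≤ 1) {m : S → FiniteMeasure X} (hm : IsEmbedding m)
    (hmass : ∀ s, (m s : Measure X) univ ≤ 1) :
    UnitMetrizes fun s t => uwDist dist (m s : Measure X) (m t : Measure X) := by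
  simp only [uwDist_dist_eq_toReal_uwEDist hdist (hmass _) (hmass _)]
  have hle (s t) : uwEDist (m s : Measure X) (m t : Measure X) ≤ 1 :=
    uwEDist_le_max_univ.trans (max_le (hmass s) (hmass t))
  have hfin (s t) : uwEDist (m s : Measure X) (m t : Measure X) ≠ ∞ :=
    ((hle s t).trans_lt ENNReal.one_lt_top).ne
  have hmetric := isMetric_toReal_uwEDist hm.injective hfin
  refine ⟨hmetric, fun s t => ENNReal.toReal_le_of_le_ofReal zero_le_one (by simpa using hle s t),
    hmetric.eq_ballTop_of_nhds_eq_comap fun s => ?_⟩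
  rw [hm.nhds_eq_comap, nhds_eq_comap_uwEDist, comap_comap, comap_toReal_nhds_zero (hfin s)]
  rfl

theorem UnitMetrizes.uwDist [TopologicalSpace X] [BorelSpace X] [SecondCountableTopology X]
    {d : X → X → ℝ} (hd : UnitMetrizes d) {m : S → FiniteMeasure X} (hm : IsEmbedding m)
    (hmass : ∀ s, (m s : Measure X) univ ≤ 1) :
    UnitMetrizes fun s t => uwDist d (m s : Measure X) (m t : Measure X) := by
  obtain ⟨metric, rfl, htop⟩ := hd.isMetric.exists_metricSpace
  obtain rfl := hd.topology_eq.trans htop.symm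
  exact unitMetrizes_uwDist_dist hd.le_one hm hmass

end Metrizes

section IteratedDegreeMeasures

lemma unitMetrizes_Wdist_zero : UnitMetrizes (Wdist 0) := by
  have : Subsingleton (M 0) := inferInstanceAs (Subsingleton Unit)
  exact ⟨⟨fun _ _ => le_rfl, fun _ _ => rfl, fun x y => iff_of_true rfl (Subsingleton.elim x y),
    fun _ _ _ => (add_zero _).ge⟩, fun _ _ => zero_le_one, Subsingleton.elim _ _⟩

/-- The iterated degree measure `α` as an element of Mathlib's space of finite measures. -/
def toFiniteMeasure {h : ℕ} (α : M (h + 1)) : FiniteMeasure (M h) :=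
  ⟨toMeas α, ⟨(toSub α).2.trans_lt ENNReal.one_lt_top⟩⟩

lemma isEmbedding_toFiniteMeasure {h : ℕ} :
    IsEmbedding (toFiniteMeasure : M (h + 1) → FiniteMeasure (M h)) :=
  ⟨⟨iInf_induced_integral_eq_induced toFiniteMeasure⟩,
    fun _ _ hαβ => Subtype.ext (congrArg FiniteMeasure.toMeasure hαβ)⟩

lemma unitMetrizes_Wdist_and_secondCountableTopology (h : ℕ) :
    UnitMetrizes (Wdist h) ∧ SecondCountableTopology (M h) := by
  induction h with
  | zero => exact ⟨unitMetrizes_Wdist_zero, inferInstanceAs (SecondCountableTopology Unit)⟩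
  | succ h ih =>
    obtain ⟨hW, _⟩ := ih
    have := hW.metrizableSpace
    have := secondCountableTopology_finiteMeasure (X := M h)
    exact ⟨hW.uwDist isEmbedding_toFiniteMeasure fun α => (toSub α).2,
      isEmbedding_toFiniteMeasure.secondCountableTopology⟩

end IteratedDegreeMeasures

/-- For every `h`, the unbalanced Wasserstein metric `W^h` is a well-defined metric on
`M h` metrizing its weak topology, and the induced Wasserstein metric `δW^h` on Borel
probability measures on `M h` is a well-defined metric metrizing the weak topology. -/
theorem wasserstein_metrizes (h : ℕ) :
    IsMetric (Wdist h) ∧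
    (inferInstance : TopologicalSpace (M h)) = ballTop (Wdist h) ∧
    IsMetric (fun μ ν : ProbM (M h) => wassersteinDist (Wdist h) μ.val ν.val) ∧
    probWeakTop (M h) =
      ballTop (fun μ ν : ProbM (M h) => wassersteinDist (Wdist h) μ.val ν.val) := by
  obtain ⟨hW, _⟩ := unitMetrizes_Wdist_and_secondCountableTopology h
  let := probWeakTop (M h)
  let m (μ : ProbM (M h)) : FiniteMeasure (M h) := ⟨μ.val, have := μ.property; inferInstance⟩
  have hm : IsEmbedding m :=
    ⟨⟨iInf_induced_integral_eq_induced m⟩,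
      fun _ _ hμν => Subtype.ext (congrArg FiniteMeasure.toMeasure hμν)⟩
  have hδ : UnitMetrizes fun μ ν : ProbM (M h) => wassersteinDist (Wdist h) μ.val ν.val := by
    have hδW (μ ν : ProbM (M h)) :
        wassersteinDist (Wdist h) μ.val ν.val = uwDist (Wdist h) μ.val ν.val :=
      have := μ.property
      have := ν.property
      wassersteinDist_eq_uwDist _ _ _
    simpa only [hδW] using! hW.uwDist hm fun μ => μ.property.measure_univ.le
  exact ⟨hW.isMetric, hW.topology_eq, hδ.isMetric, hδ.topology_eq⟩

end
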